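/- Let n ≥ 3 and let f ∈ Aut(F_n). Assume: (1) IA_n ⊆ N(f); (2) Γ_n(3) ⊆ ρ(N(f)); (3) the image of ρ(N(f)) ∩ SL_n(ℤ) under the composite SL_n(ℤ) → SL_n(ℤ/3ℤ) → PSL_n(ℤ/3ℤ) is nontrivial. Then N(f) = SAut(F_n) if det(f̄) = 1, and N(f) = Aut(F_n) if det(f̄) = −1. -/

import Mathlib

open Matrix

namespace NormalClosurePaper

/-- The automorphism group of the free group on `n` generators. -/
abbrev FrAut (n : ℕ) := MulAut (FreeGroup (Fin n))

/-- Exponent sum of the generator `x_i` in a word of the free group. -/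
def expSum {n : ℕ} (i : Fin n) : FreeGroup (Fin n) →* Multiplicative ℤ :=
  FreeGroup.lift fun j => Multiplicative.ofAdd (if j = i then (1 : ℤ) else 0)

/-- The abelianized matrix of an automorphism of the free group:
the `(i, j)` entry is the exponent sum of `x_i` in `f x_j`. -/
def mat {n : ℕ} (f : FrAut n) : Matrix (Fin n) (Fin n) ℤ :=
  Matrix.of fun i j => (expSum i (f (FreeGroup.of j))).toAdd

lemma expSum_apply {n : ℕ} (f : FrAut n) (i : Fin n) (w : FreeGroup (Fin n)) :
    (expSum i (f w)).toAdd = ∑ k, mat f i k * (expSum k w).toAdd := by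
  induction w using FreeGroup.induction_on with
  | C1 => simp
  | of j =>
      have h : (expSum i (f (FreeGroup.of j))).toAdd = mat f i j := rfl
      rw [h]
      simp [expSum, mul_ite, Finset.sum_ite_eq]
  | inv_of j ih =>
      simp only [_root_.map_inv, toAdd_inv, mul_neg, Finset.sum_neg_distrib, ih]
  | mul x y ihx ihy =>
      simp only [_root_.map_mul, toAdd_mul, mul_add, Finset.sum_add_distrib, ihx, ihy]

lemma mat_one {n : ℕ} : mat (1 : FrAut n) = 1 := by
  ext i j
  simp [mat, expSum, Matrix.one_apply, eq_comm]

lemma mat_mul {n : ℕ} (f g : FrAut n) : mat (f * g) = mat f * mat g := by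
  ext i j
  rw [Matrix.mul_apply]
  show (expSum i ((f * g) (FreeGroup.of j))).toAdd = _
  rw [show (f * g) (FreeGroup.of j) = f (g (FreeGroup.of j)) from rfl, expSum_apply]
  rfl

/-- The matrix of the induced map on the abelianization, as a monoid homomorphism. -/
def matHom (n : ℕ) : FrAut n →* Matrix (Fin n) (Fin n) ℤ where
  toFun := mat
  map_one' := mat_one
  map_mul' := mat_mul

/-- The homomorphism `Aut(F_n) → GL_n(ℤ)` induced by abelianization. -/
def ρ (n : ℕ) : FrAut n →* GL (Fin n) ℤ := (matHom n).toHomUnits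

/-- The composition of `ρ` with the determinant. -/
def detρ (n : ℕ) : FrAut n →* ℤˣ := (Matrix.GeneralLinearGroup.det).comp (ρ n)

/-- The special automorphism group `SAut(F_n)`: automorphisms whose induced matrix
has determinant `1`. -/
def SAut (n : ℕ) : Subgroup (FrAut n) := (detρ n).ker

/-- The Torelli subgroup `IA_n`, the kernel of `ρ`. -/
def IA (n : ℕ) : Subgroup (FrAut n) := (ρ n).ker

/-- The group of inner automorphisms of the free group. -/
def Inn (n : ℕ) : Subgroup (FrAut n) := (MulAut.conj (G := FreeGroup (Fin n))).range

instance Inn_normal (n : ℕ) : (Inn n).Normal := by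
  constructor
  rintro - ⟨a, rfl⟩ g
  refine ⟨g a, ?_⟩
  ext y
  simp [MulAut.conj_apply, MulAut.mul_apply, _root_.map_mul, _root_.map_inv]

/-- The outer automorphism group `Out(F_n)`. -/
abbrev OutF (n : ℕ) := FrAut n ⧸ Inn n

/-- The projection `Aut(F_n) → Out(F_n)`. -/
def toOut (n : ℕ) : FrAut n →* OutF n := QuotientGroup.mk' (Inn n)

lemma mat_conj {n : ℕ} (g : FreeGroup (Fin n)) : mat (MulAut.conj g) = 1 := by
  rw [← mat_one (n := n)]
  ext i j
  simp only [mat, Matrix.of_apply, MulAut.conj_apply, MulAut.one_apply, _root_.map_mul,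
    _root_.map_inv, toAdd_mul, toAdd_inv]
  omega

lemma ρ_conj {n : ℕ} (g : FreeGroup (Fin n)) : ρ n (MulAut.conj g) = 1 :=
  Units.ext (mat_conj g)

/-- The homomorphism `Out(F_n) → GL_n(ℤ)` induced by abelianization. -/
def ρOut (n : ℕ) : OutF n →* GL (Fin n) ℤ :=
  QuotientGroup.lift (Inn n) (ρ n) (by rintro - ⟨g, rfl⟩; exact ρ_conj g)

/-- The composition of `ρOut` with the determinant. -/
def detρOut (n : ℕ) : OutF n →* ℤˣ := (Matrix.GeneralLinearGroup.det).comp (ρOut n)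

/-- The special outer automorphism group `SOut(F_n)`. -/
def SOut (n : ℕ) : Subgroup (OutF n) := (detρOut n).ker

/-- Entrywise reduction `GL_n(ℤ) → GL_n(ℤ/ℓℤ)`. -/
def redGL (n ℓ : ℕ) : GL (Fin n) ℤ →* GL (Fin n) (ZMod ℓ) :=
  Units.map (RingHom.mapMatrix (Int.castRingHom (ZMod ℓ))).toMonoidHom

/-- The subgroup `GΓ_n(ℓ)` of `GL_n(ℤ)` of matrices congruent to the identity mod `ℓ`. -/
def GGamma (n ℓ : ℕ) : Subgroup (GL (Fin n) ℤ) := (redGL n ℓ).ker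

/-- The level `ℓ` congruence subgroup `Γ_n(ℓ)` (viewed inside `GL_n(ℤ)`): matrices with
determinant `1` that are congruent to the identity mod `ℓ`. -/
def GammaGL (n ℓ : ℕ) : Subgroup (GL (Fin n) ℤ) :=
  GGamma n ℓ ⊓ (Matrix.GeneralLinearGroup.det).ker

/-- Reduction `SL_n(ℤ) → SL_n(ℤ/ℓℤ)`. -/
def redSL (n ℓ : ℕ) : Matrix.SpecialLinearGroup (Fin n) ℤ →*
    Matrix.SpecialLinearGroup (Fin n) (ZMod ℓ) :=
  Matrix.SpecialLinearGroup.map (Int.castRingHom (ZMod ℓ))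

/-- Projection `SL_n(ℤ/ℓℤ) → PSL_n(ℤ/ℓℤ)`. -/
def projPSL (n ℓ : ℕ) : Matrix.SpecialLinearGroup (Fin n) (ZMod ℓ) →*
    Matrix.ProjectiveSpecialLinearGroup (Fin n) (ZMod ℓ) :=
  QuotientGroup.mk' _


/-- The inclusion `SL_n(ℤ) → GL_n(ℤ)`. -/
def toGLZ (n : ℕ) : Matrix.SpecialLinearGroup (Fin n) ℤ →* GL (Fin n) ℤ :=
  Matrix.SpecialLinearGroup.toGL

/-!
Nielsen automorphisms induce all elementary transvections, so `SAut(F_n)` acts on the homology of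
`F_n` modulo `3` through a surjection onto `SL_n(ℤ/3ℤ)`. The image of `N(f) ∩ SAut(F_n)` is a
normal subgroup, and it is not central by (3). Iwasawa's criterion for the action on projective
space, where the transvections with a given direction form an abelian subgroup, shows that such a
subgroup contains the commutator subgroup, which is all of `SL_n(ℤ/3ℤ)` since `n ≥ 3`. By (1) and
(2) the kernel of the surjection lies in `N(f)`, hence `SAut(F_n) ⊆ N(f)`.
-/

section SpecialLinearGroup

open Matrix.SpecialLinearGroup
open scoped commutatorElement LinearAlgebra.Projectivization

variable {ι : Type*} [Fintype ι] [DecidableEq ι]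

lemma commutator_transvection {R : Type*} [CommRing R] {i j k : ι} (hij : i ≠ j) (hjk : j ≠ k)
    (hik : i ≠ k) (a b : R) :
    ⁅transvection hij a, transvection hjk b⁆ = transvection hik (a * b) := by
  rw [commutatorElement_def, mul_inv_eq_iff_eq_mul, mul_inv_eq_iff_eq_mul]
  refine Subtype.ext ?_
  simp only [Matrix.SpecialLinearGroup.coe_mul, transvection_coe, mul_add, add_mul, one_mul,
    mul_one, zero_mul, single_mul_single_same, single_mul_single_of_ne _ _ _ _ hik.symm,
    single_mul_single_of_ne _ _ _ _ hjk.symm]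
  abel

variable {F : Type*} [Field F]

lemma diag2n_eq_prod_transvection {i j : ι} (hij : i ≠ j) (a : F) (ha : a ≠ 0) :
    diag2n hij a ha = transvection hij a * transvection hij.symm (-a⁻¹) * transvection hij a *
      transvection hij (-1) * transvection hij.symm 1 * transvection hij (-1) := by
  have hdiag : (diag2n hij a ha).1 = 1 + single i i (a - 1) + single j j (a⁻¹ - 1) := by
    rw [diag2n_coe]
    ext k l
    simp only [diagonal_apply, Matrix.add_apply, Matrix.one_apply, single_apply]
    grind
  refine Subtype.ext (hdiag.trans ?_)
  simp only [Matrix.SpecialLinearGroup.coe_mul, transvection_coe, mul_add, add_mul, one_mul,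
    mul_one, single_mul_single_same, single_mul_single_of_ne _ _ _ _ hij,
    single_mul_single_of_ne _ _ _ _ hij.symm, add_zero]
  ext k l
  simp only [Matrix.add_apply, Matrix.one_apply, single_apply]
  grind

lemma eq_top_of_forall_transvection_mem {H : Subgroup (SpecialLinearGroup ι F)}
    (hH : ∀ (i j : ι) (hij : i ≠ j) (b : F), transvection hij b ∈ H) : H = ⊤ := by
  cases subsingleton_or_nontrivial ι
  · exact Subsingleton.elim _ _
  refine (Subgroup.eq_top_iff' H).2 fun A => ?_
  refine diagonal_transvection_induction' (· ∈ H) A (fun i j hij c hc => ?_) hH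
    fun _ _ => H.mul_mem
  rw [diag2n_eq_prod_transvection]
  iterate 5 refine H.mul_mem ?_ (hH _ _ _ _)
  exact hH _ _ _ _

lemma isPerfect_of_two_lt_card (hι : 2 < Fintype.card ι) :
    Group.IsPerfect (SpecialLinearGroup ι F) := by
  refine ⟨eq_top_of_forall_transvection_mem fun i k hik b => ?_⟩
  obtain ⟨j, -, hj⟩ : ∃ j ∈ Finset.univ, j ∉ ({i, k} : Finset ι) :=
    Finset.exists_mem_notMem_of_card_lt_card (Finset.card_le_two.trans_lt hι)
  obtain ⟨hji, hjk⟩ : j ≠ i ∧ j ≠ k := by simpa using hj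
  rw [← mul_one b, ← commutator_transvection hji.symm hjk hik]
  exact Subgroup.commutator_mem_commutator (Subgroup.mem_top _) (Subgroup.mem_top _)

lemma iSup_lineStab_eq_top :
    ⨆ p : ℙ F (ι → F), lineStab p.submodule = (⊤ : Subgroup (SpecialLinearGroup ι F)) := by
  refine eq_top_of_forall_transvection_mem fun i j hij b => ?_
  have he : (Pi.single i 1 : ι → F) ≠ 0 := by simp
  refine Subgroup.mem_iSup_of_mem (Projectivization.mk F _ he) ?_
  rw [Projectivization.submodule_mk]
  exact SL2Gen.transvection_mem_lineStab hij b

/-- The Iwasawa structure of `SL_n(F)` acting on the points of projective space, given by the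
subgroups of transvections with a given direction. -/
def lineStabIwasawaStructure :
    MulAction.IwasawaStructure (SpecialLinearGroup ι F) (ℙ F (ι → F)) where
  T p := lineStab p.submodule
  is_comm p := by
    rw [← p.mk_rep, Projectivization.submodule_mk]
    exact lineStab_isMulCommutative_of_span p.rep p.rep_nonzero
  is_conj g p := by rw [PSL.smul_submodule, lineStab_smul]
  is_generator := iSup_lineStab_eq_top

lemma eq_top_of_normal_of_not_le_center [Group.IsPerfect (SpecialLinearGroup ι F)]
    {N : Subgroup (SpecialLinearGroup ι F)} [N.Normal]
    (hN : ¬ N ≤ Subgroup.center (SpecialLinearGroup ι F)) : N = ⊤ := by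
  have hmoves : MulAction.fixedPoints N (ℙ F (ι → F)) ≠ .univ := fun hfix => hN fun A hA => by
    rw [← Projectivization.SL_mulAction_ker, MonoidHom.mem_ker]
    exact Equiv.ext fun p => Set.eq_univ_iff_forall.1 hfix p ⟨A, hA⟩
  exact top_le_iff.1
    (Group.IsPerfect.commutator_eq_top.ge.trans (lineStabIwasawaStructure.commutator_le N hmoves))

end SpecialLinearGroup

section Nielsen

variable {α : Type*} [DecidableEq α]

/-- The endomorphism of the free group sending `x_j` to `x_j * x_i ^ m` and fixing all other
generators. The exponent `m` makes its abelianization an arbitrary integral transvection. -/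
def nielsenHom (i j : α) (m : ℤ) : FreeGroup α →* FreeGroup α :=
  FreeGroup.lift fun k => if k = j then FreeGroup.of j * FreeGroup.of i ^ m else FreeGroup.of k

lemma nielsenHom_of (i j k : α) (m : ℤ) : nielsenHom i j m (FreeGroup.of k) =
    if k = j then FreeGroup.of j * FreeGroup.of i ^ m else FreeGroup.of k :=
  FreeGroup.lift_apply_of

lemma nielsenHom_comp_neg {i j : α} (hij : i ≠ j) (m : ℤ) :
    (nielsenHom i j m).comp (nielsenHom i j (-m)) = MonoidHom.id _ := by
  ext k : 1
  rw [MonoidHom.comp_apply, nielsenHom_of]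
  split_ifs with hk
  · simp [nielsenHom_of, hij, hk]
  · simp [nielsenHom_of, hk]

/-- The Nielsen automorphism `x_j ↦ x_j * x_i ^ m` of the free group, which lifts the elementary
transvection with entry `m` in position `(i, j)`. -/
def nielsen {i j : α} (hij : i ≠ j) (m : ℤ) : MulAut (FreeGroup α) :=
  MonoidHom.toMulEquiv (nielsenHom i j m) (nielsenHom i j (-m))
    (by simpa only [neg_neg] using nielsenHom_comp_neg hij (-m)) (nielsenHom_comp_neg hij m)

lemma mat_nielsen {n : ℕ} {i j : Fin n} (hij : i ≠ j) (m : ℤ) :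
    mat (nielsen hij m) = Matrix.transvection i j m := by
  ext k l
  change (expSum k (nielsenHom i j m (FreeGroup.of l))).toAdd = _
  rw [nielsenHom_of]
  split_ifs with hl
  · subst hl
    simp only [expSum, map_mul, FreeGroup.lift_apply_of, map_zpow, toAdd_mul, toAdd_ofAdd,
      toAdd_zpow, smul_eq_mul, Matrix.transvection, Matrix.add_apply, Matrix.one_apply,
      single_apply]
    grind
  · simp only [expSum, FreeGroup.lift_apply_of, toAdd_ofAdd, Matrix.transvection,
      Matrix.add_apply, Matrix.one_apply, single_apply]
    grind

end Nielsen

namespace SAut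

/-- The homomorphism `SAut(F_n) → SL_n(ℤ)` obtained by restricting `ρ`. -/
def toSL (n : ℕ) : SAut n →* SpecialLinearGroup (Fin n) ℤ where
  toFun g := ⟨mat g.1, congrArg Units.val g.2⟩
  map_one' := Subtype.ext mat_one
  map_mul' g h := Subtype.ext (mat_mul g.1 h.1)

/-- The action of `SAut(F_n)` on the homology of `F_n` modulo `ℓ`, as a homomorphism
`SAut(F_n) → SL_n(ℤ/ℓℤ)`. -/
def modHom (n ℓ : ℕ) : SAut n →* SpecialLinearGroup (Fin n) (ZMod ℓ) :=
  (redSL n ℓ).comp (toSL n)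

variable {n : ℕ}

lemma toGLZ_toSL (g : SAut n) : toGLZ n (toSL n g) = ρ n g := Units.ext rfl

lemma map_toSL_subgroupOf (H : Subgroup (FrAut n)) :
    (H.subgroupOf (SAut n)).map (toSL n) = (H.map (ρ n)).comap (toGLZ n) := by
  refine le_antisymm ?_ ?_
  · rintro _ ⟨g, hg, rfl⟩
    exact ⟨g, hg, (toGLZ_toSL g).symm⟩
  · rintro A ⟨g, hg, hgA⟩
    have hdet : detρ n g = 1 := (congrArg GeneralLinearGroup.det hgA).trans (Units.ext A.2)
    exact ⟨⟨g, hdet⟩, hg, Subtype.ext (congrArg Units.val hgA)⟩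

lemma modHom_surjective (p : ℕ) [Fact p.Prime] : Function.Surjective (modHom n p) := by
  refine MonoidHom.range_eq_top.1 (eq_top_of_forall_transvection_mem fun i j hij b => ?_)
  obtain ⟨m, rfl⟩ := ZMod.intCast_surjective b
  have hdet : detρ n (nielsen hij m) = 1 :=
    Units.ext ((congrArg det (mat_nielsen hij m)).trans (det_transvection_of_ne i j hij m))
  refine ⟨⟨nielsen hij m, hdet⟩, Subtype.ext ?_⟩
  change (mat (nielsen hij m)).map (Int.castRingHom (ZMod p)) = 1 + single i j (m : ZMod p)
  rw [mat_nielsen, Matrix.transvection, Matrix.map_add _ (map_add _),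
    Matrix.map_one _ (map_zero _) (map_one _), map_single, eq_intCast]

lemma ker_modHom_le {ℓ : ℕ} {H : Subgroup (FrAut n)} (hIA : IA n ≤ H)
    (hΓ : GammaGL n ℓ ≤ H.map (ρ n)) : (modHom n ℓ).ker ≤ H.subgroupOf (SAut n) := by
  intro g hg
  have hgΓ : ρ n g ∈ GammaGL n ℓ := ⟨Units.ext (congrArg Subtype.val hg), g.2⟩
  rw [Subgroup.mem_subgroupOf, ← Subgroup.comap_map_eq_self hIA]
  exact hΓ hgΓ

lemma le_of_normal (p : ℕ) [Fact p.Prime]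
    [Group.IsPerfect (SpecialLinearGroup (Fin n) (ZMod p))] {H : Subgroup (FrAut n)} [H.Normal]
    (hIA : IA n ≤ H) (hΓ : GammaGL n p ≤ H.map (ρ n))
    (hPSL : ((H.map (ρ n)).comap (toGLZ n)).map ((projPSL n p).comp (redSL n p)) ≠ ⊥) :
    SAut n ≤ H := by
  have hnormal : ((H.subgroupOf (SAut n)).map (modHom n p)).Normal :=
    Subgroup.Normal.map inferInstance _ (modHom_surjective p)
  have hcenter : ¬ (H.subgroupOf (SAut n)).map (modHom n p) ≤ Subgroup.center _ := by
    rwa [← map_toSL_subgroupOf, ← Subgroup.map_map, Subgroup.map_map _ (redSL n p), Ne,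
      Subgroup.map_eq_bot_iff, projPSL, QuotientGroup.ker_mk'] at hPSL
  have htop : (H.subgroupOf (SAut n)).map (modHom n p) = ⊤ :=
    eq_top_of_normal_of_not_le_center hcenter
  rw [← Subgroup.subgroupOf_eq_top, ← Subgroup.comap_map_eq_self (ker_modHom_le hIA hΓ), htop,
    Subgroup.comap_top]

lemma normalClosure_singleton_le {f : FrAut n} (hf : detρ n f = 1) :
    Subgroup.normalClosure {f} ≤ SAut n :=
  have : (SAut n).Normal := MonoidHom.normal_ker _
  Subgroup.normalClosure_le_normal (Set.singleton_subset_iff.2 hf)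

lemma eq_top_of_le_of_detρ_eq_neg_one {H : Subgroup (FrAut n)} (hH : SAut n ≤ H) {f : FrAut n}
    (hfH : f ∈ H) (hf : detρ n f = -1) : H = ⊤ := by
  refine (Subgroup.eq_top_iff' H).2 fun g => ?_
  rcases Int.units_eq_one_or (detρ n g) with hg | hg
  · exact hH hg
  · have hgf : g * f ∈ SAut n := by
      rw [SAut, MonoidHom.mem_ker, map_mul, hg, hf, neg_mul_neg, one_mul]
    exact (H.mul_mem_cancel_right hfH).1 (hH hgf)

end SAut

theorem normalClosure_of_level_three_general (n p : ℕ) [Fact p.Prime]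
    [Group.IsPerfect (SpecialLinearGroup (Fin n) (ZMod p))] (f : FrAut n)
    (hIA : IA n ≤ Subgroup.normalClosure {f})
    (hΓ : GammaGL n p ≤ (Subgroup.normalClosure {f}).map (ρ n))
    (hPSL : Subgroup.map ((projPSL n p).comp (redSL n p))
        (Subgroup.comap (toGLZ n) ((Subgroup.normalClosure {f}).map (ρ n))) ≠ ⊥) :
    (detρ n f = 1 → Subgroup.normalClosure {f} = SAut n) ∧
    (detρ n f = -1 → Subgroup.normalClosure {f} = ⊤) := by
  have hle : SAut n ≤ Subgroup.normalClosure {f} := SAut.le_of_normal p hIA hΓ hPSL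
  have hf : f ∈ Subgroup.normalClosure {f} := Subgroup.subset_normalClosure rfl
  exact ⟨fun hdet => (SAut.normalClosure_singleton_le hdet).antisymm hle,
    SAut.eq_top_of_le_of_detρ_eq_neg_one hle hf⟩

/-- **Lemma 3.6 (level 3).** For `n ≥ 3` and `f ∈ Aut(F_n)`: if `IA_n ⊆ N(f)`,
`Γ_n(3) ⊆ ρ(N(f))`, and the image of `ρ(N(f)) ∩ SL_n(ℤ)` in `PSL_n(ℤ/3ℤ)` is nontrivial,
then `N(f) = SAut(F_n)` if `det f̄ = 1` and `N(f) = Aut(F_n)` if `det f̄ = -1`. -/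
theorem normalClosure_of_level_three (n : ℕ) (hn : 3 ≤ n) (f : FrAut n)
    (h1 : IA n ≤ Subgroup.normalClosure {f})
    (h2 : GammaGL n 3 ≤ (Subgroup.normalClosure {f}).map (ρ n))
    (h3 : Subgroup.map ((projPSL n 3).comp (redSL n 3))
        (Subgroup.comap (toGLZ n) ((Subgroup.normalClosure {f}).map (ρ n))) ≠ ⊥) :
    (detρ n f = 1 → Subgroup.normalClosure {f} = SAut n) ∧
    (detρ n f = -1 → Subgroup.normalClosure {f} = ⊤) := by
  have : Group.IsPerfect (SpecialLinearGroup (Fin n) (ZMod 3)) :=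
    isPerfect_of_two_lt_card (by rwa [Fintype.card_fin])
  exact normalClosure_of_level_three_general n 3 f h1 h2 h3

end NormalClosurePaper
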